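/- The quantity (f^λ · f^{n^m/λ}) / (s_λ(1^m) · s_{λ'}(1^n)) does not depend on the choice of the partition λ ⊆ n^m with |λ| = p; it equals f^{n^m} / C(mn, p). -/

import Mathlib

open YoungDiagram Finset

/-- The rectangular Young diagram with `m` rows and `n` columns. -/
def rect (m n : ℕ) : YoungDiagram where
  cells := Finset.range m ×ˢ Finset.range n
  isLowerSet := by
    rintro ⟨a1, a2⟩ ⟨b1, b2⟩ ⟨h1, h2⟩ hb
    simp only [Finset.coe_product, Set.mem_prod, Finset.mem_coe, Finset.mem_range] at *
    exact ⟨lt_of_le_of_lt h1 hb.1, lt_of_le_of_lt h2 hb.2⟩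

/-- The 180°-rotated complement of a Young diagram `μ` inside the rectangle with
`m` rows and `n` columns: its row lengths are `n - μ.rowLen (m-1-i)`. -/
def complement (m n : ℕ) (μ : YoungDiagram) : YoungDiagram where
  cells := (Finset.range m ×ˢ Finset.range n).filter fun p => p.2 < n - μ.rowLen (m - 1 - p.1)
  isLowerSet := by
    rintro ⟨a1, a2⟩ ⟨b1, b2⟩ ⟨h1, h2⟩ hb
    simp only [Finset.coe_filter, Set.mem_setOf_eq, Finset.mem_product, Finset.mem_range] at *
    refine ⟨⟨lt_of_le_of_lt h1 hb.1.1, lt_of_le_of_lt h2 hb.1.2⟩, ?_⟩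
    calc b2 ≤ a2 := h2
      _ < n - μ.rowLen (m - 1 - a1) := hb.2
      _ ≤ n - μ.rowLen (m - 1 - b1) :=
          Nat.sub_le_sub_left (μ.rowLen_anti _ _ (Nat.sub_le_sub_left h1 _)) n

/-- The hook length of the cell `c` in the Young diagram `μ` (arm + leg + 1). -/
def hookLength (μ : YoungDiagram) (c : ℕ × ℕ) : ℕ :=
  (μ.rowLen c.1 - c.2) + (μ.colLen c.2 - c.1) - 1

/-- The product of all hook lengths of `μ`. -/
def hookProd (μ : YoungDiagram) : ℕ := ∏ c ∈ μ.cells, hookLength μ c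

/-- The number of semistandard Young tableaux of shape `μ` with entries in `{0, …, k-1}`;
this equals `s_μ(1^k) = dim S^μ(ℂ^k)`. -/
noncomputable def ssytCount (μ : YoungDiagram) (k : ℕ) : ℕ :=
  Set.ncard {T : SemistandardYoungTableau μ | ∀ i j, (i, j) ∈ μ → T i j < k}

/-- `T : ℕ × ℕ → ℕ` is a standard Young tableau of shape `μ` (with entries `0, …, |μ|-1`):
it is a bijection from the cells of `μ` to `{0, …, |μ|-1}`, strictly increasing along
rows and columns, and zero outside `μ`. -/
def IsSyt (μ : YoungDiagram) (T : ℕ × ℕ → ℕ) : Prop :=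
  Set.BijOn T (μ.cells : Set (ℕ × ℕ)) (Finset.range μ.card : Set ℕ) ∧
  (∀ i j, (i, j + 1) ∈ μ → T (i, j) < T (i, j + 1)) ∧
  (∀ i j, (i + 1, j) ∈ μ → T (i, j) < T (i + 1, j)) ∧
  (∀ c, c ∉ μ → T c = 0)

/-- The number of standard Young tableaux of shape `μ`, i.e. `f^μ`. -/
noncomputable def sytCount (μ : YoungDiagram) : ℕ := Set.ncard {T | IsSyt μ T}

/-!
List the rows of a diagram `μ` with at most `m` rows from the bottom up and put
`xᵢ = μ_{m-1-i} + i`, a strictly increasing sequence. Both tableau counts are determined by its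
Vandermonde determinant `Δ(x)`.

* `s_μ(1^m) ∏_{i<m} i! = Δ(x)`: removing the largest entry from a semistandard tableau removes a
  horizontal strip, which makes the two shifted sequences interlace, and the determinant of the
  binomials `(xᵢ choose j)` satisfies the same recursion since it is multilinear in its rows.
* `f^μ ∏ xᵢ! = |μ|! Δ(x)`: removing the largest entry from a standard tableau removes a corner, that
  is, decrements one `xᵢ`, and `∑ᵢ xᵢ Δ(x - eᵢ) = |μ| Δ(x)`.

The rotated complement of `μ` in the `m × n` rectangle has the sequence `m + n - 1 - x_{m-1-i}`, so
it has the same `Δ`. This sequence and that of the transpose of `μ` together exhaust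
`{0, …, m+n-1}`. Hence in the product of the second formula for the transpose and for the complement
the denominators multiply to `∏_{k<m+n} k!`, which leaves
`f^μ f^{n^m/μ} = p! (mn-p)! s_μ(1^m) s_{μ'}(1^n) · c` with `c` depending only on `m` and `n`. The
case `μ = ∅` evaluates `c`.
-/

section Determinants

open Matrix Function

variable {R : Type*} [CommRing R]

lemma sum_det_updateRow_sub_mul {ι : Type*} [Fintype ι] [DecidableEq ι]
    (A : Matrix ι ι R) (a b : ι → R) :
    ∑ i, (A.updateRow i fun j => (a i - b j) * A i j).det = (∑ i, a i - ∑ j, b j) * A.det := by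
  have expand (i : ι) : (A.updateRow i fun j => (a i - b j) * A i j).det =
      ∑ j, a i * (A i j * A.adjugate j i) - ∑ j, b j * (A.adjugate j i * A i j) := by
    rw [← cramer_transpose_apply, cramer_eq_adjugate_mulVec, ← adjugate_transpose,
      ← Finset.sum_sub_distrib]
    exact Finset.sum_congr rfl fun j _ => by
      change A.adjugate j i * ((a i - b j) * A i j) = _
      ring
  have row_expansion (i : ι) : ∑ j, A i j * A.adjugate j i = A.det := by
    rw [← mul_apply, mul_adjugate, Matrix.smul_apply, one_apply_eq, smul_eq_mul, mul_one]
  have col_expansion (j : ι) : ∑ i, A.adjugate j i * A i j = A.det := by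
    rw [← mul_apply, adjugate_mul, Matrix.smul_apply, one_apply_eq, smul_eq_mul, mul_one]
  simp_rw [expand, Finset.sum_sub_distrib]
  rw [Finset.sum_comm (f := fun i j => b j * _)]
  simp_rw [← Finset.mul_sum, row_expansion, col_expansion, ← Finset.sum_mul, ← sub_mul]

lemma mul_eval_descPochhammer_sub_one (j : ℕ) (t : R) :
    t * (descPochhammer R j).eval (t - 1) = (t - j) * (descPochhammer R j).eval t := by
  have eval_succ : (descPochhammer R (j + 1)).eval t = t * (descPochhammer R j).eval (t - 1) := by
    simp [descPochhammer_succ_left]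
  rw [← eval_succ, descPochhammer_succ_eval, mul_comm]

lemma det_vandermonde_eq_det_descPochhammer [IsDomain R] {m : ℕ} (x : Fin m → R) :
    (vandermonde x).det = (of fun i j : Fin m => (descPochhammer R j).eval (x i)).det :=
  det_eval_matrixOfPolynomials_eq_det_vandermonde x (fun j => descPochhammer R j)
    (fun j => descPochhammer_natDegree R j) (fun j => monic_descPochhammer R j)

-- In the basis of falling factorials, decrementing `x i` multiplies the entries of row `i` by
-- `x i - j`, up to the factor `x i`.
theorem sum_mul_det_vandermonde_update_sub_one [IsDomain R] {m : ℕ} (x : Fin m → R) :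
    ∑ i, x i * (vandermonde (update x i (x i - 1))).det =
      (∑ i, x i - ∑ i : Fin m, (i : R)) * (vandermonde x).det := by
  simp_rw [det_vandermonde_eq_det_descPochhammer]
  set A : Matrix (Fin m) (Fin m) R := of fun i j => (descPochhammer R j).eval (x i)
  rw [← sum_det_updateRow_sub_mul]
  refine Finset.sum_congr rfl fun i _ => ?_
  have decrement_row : (of fun k j : Fin m =>
      (descPochhammer R j).eval (update x i (x i - 1) k)) =
        A.updateRow i fun j => (descPochhammer R j).eval (x i - 1) := by
    ext k j
    rcases eq_or_ne k i with rfl | hk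
    · simp
    · simp [A, hk]
  rw [decrement_row, ← det_updateRow_smul]
  congr 2
  ext j
  exact mul_eval_descPochhammer_sub_one (j : ℕ) (x i)

lemma det_vandermonde_sub_rev {m : ℕ} (x : Fin m → R) (c : R) :
    (vandermonde fun i => c - x i.rev).det = (vandermonde x).det := by
  simp_rw [det_vandermonde, Finset.prod_sigma']
  refine Finset.prod_bij' (fun p _ => ⟨p.2.rev, p.1.rev⟩) (fun p _ => ⟨p.2.rev, p.1.rev⟩)
    ?_ ?_ ?_ ?_ ?_ <;> simp

lemma det_vandermonde_natCast [IsDomain R] {m : ℕ} (x : Fin m → ℕ) :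
    (vandermonde fun i => (x i : R)).det =
      (∏ i : Fin m, ((i : ℕ).factorial : R)) *
        (of fun i j : Fin m => ((x i).choose j : R)).det := by
  rw [det_vandermonde_eq_det_descPochhammer, ← det_mul_row]
  congr 1
  ext i j
  simp [descPochhammer_eval_eq_descFactorial, Nat.descFactorial_eq_factorial_mul_choose]

lemma sum_Ico_natCast_choose {a b : ℕ} (h : a ≤ b) (j : ℕ) :
    ∑ y ∈ Finset.Ico a b, (y.choose j : R) = b.choose (j + 1) - a.choose (j + 1) := by
  induction b, h using Nat.le_induction with
  | base => simp
  | succ b hab ih =>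
    rw [Finset.sum_Ico_succ_top hab, ih, Nat.choose_succ_succ]
    push_cast
    ring

lemma det_choose_eq_det_sub {k : ℕ} (x : Fin (k + 1) → ℕ) :
    (of fun i j : Fin (k + 1) => ((x i).choose j : R)).det =
      (of fun i j : Fin k =>
        ((x i.succ).choose (j + 1) - (x i.castSucc).choose (j + 1) : R)).det := by
  let differences : Matrix (Fin (k + 1)) (Fin (k + 1)) R := of <| Fin.cons
    (fun j => ((x 0).choose j : R)) fun i j => (x i.succ).choose j - (x i.castSucc).choose j
  rw [det_eq_of_forall_row_eq_smul_add_pred (B := differences) (fun _ => 1) (by simp [differences])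
      (by simp [differences]), det_succ_column_zero, Fin.sum_univ_succ]
  simp only [of_apply, Fin.cons_zero, Fin.cons_succ, Fin.val_zero, Nat.choose_zero_right, sub_self,
    mul_zero, zero_mul, Finset.sum_const_zero, add_zero, pow_zero, Nat.cast_one, one_mul,
    differences]
  rfl

theorem sum_det_choose_of_interlacing {k : ℕ} {x : Fin (k + 1) → ℕ} (hx : Monotone x) :
    ∑ y ∈ Fintype.piFinset fun i : Fin k => Finset.Ico (x i.castSucc) (x i.succ),
      (of fun i j : Fin k => ((y i).choose j : R)).det =
      (of fun i j : Fin (k + 1) => ((x i).choose j : R)).det := by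
  rw [det_choose_eq_det_sub]
  refine ((detRowAlternating (R := R)).toMultilinearMap.map_sum_finset
    (fun _ (y : ℕ) (j : Fin k) => (y.choose j : R)) _).symm.trans ?_
  change Matrix.det _ = _
  congr 1
  ext i j
  rw [Finset.sum_apply]
  exact sum_Ico_natCast_choose (hx Fin.castSucc_lt_succ.le) j

end Determinants

section Diagrams

variable {μ ν : YoungDiagram} {k m n : ℕ}

lemma rowLen_eq_of_forall_mem_iff {r : ℕ} (h : ∀ j, (r, j) ∈ μ ↔ j < n) : μ.rowLen r = n :=
  eq_of_forall_lt_iff fun j => mem_iff_lt_rowLen.symm.trans (h j)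

lemma rowLen_eq_zero_iff {i : ℕ} : μ.rowLen i = 0 ↔ μ.colLen 0 ≤ i := by
  rw [← not_lt, ← mem_iff_lt_colLen, mem_iff_lt_rowLen, Nat.pos_iff_ne_zero, not_not]

lemma rowLen_le_rowLen (h : ν ≤ μ) (i : ℕ) : ν.rowLen i ≤ μ.rowLen i :=
  forall_lt_iff_le.mp fun _ hj => mem_iff_lt_rowLen.mp (h (mem_iff_lt_rowLen.mpr hj))

lemma colLen_le_colLen (h : ν ≤ μ) (j : ℕ) : ν.colLen j ≤ μ.colLen j :=
  forall_lt_iff_le.mp fun _ hi => mem_iff_lt_colLen.mp (h (mem_iff_lt_colLen.mpr hi))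

lemma finite_setOf_le (μ : YoungDiagram) : {ν | ν ≤ μ}.Finite :=
  (μ.cells.powerset.finite_toSet.preimage (f := YoungDiagram.cells)
    fun _ _ _ _ => YoungDiagram.ext).subset fun _ h =>
      Finset.mem_coe.mpr (Finset.mem_powerset.mpr (cells_subset_iff.mpr h))

lemma mem_rect {c : ℕ × ℕ} : c ∈ rect m n ↔ c.1 < m ∧ c.2 < n := by
  rw [← mem_cells, rect, Finset.mem_product, Finset.mem_range, Finset.mem_range]

lemma fst_lt_of_mem {c : ℕ × ℕ} (h : μ.colLen 0 ≤ m) (hc : c ∈ μ) : c.1 < m :=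
  (mem_iff_lt_colLen.mp (μ.up_left_mem le_rfl c.2.zero_le hc)).trans_le h

lemma le_rect_iff : μ ≤ rect m n ↔ μ.colLen 0 ≤ m ∧ μ.rowLen 0 ≤ n := by
  refine ⟨fun h => ⟨?_, ?_⟩, fun ⟨hm, hn⟩ c hc =>
    mem_rect.mpr ⟨fst_lt_of_mem hm hc, ?_⟩⟩
  · exact forall_lt_iff_le.mp fun i hi => (mem_rect.mp (h (mem_iff_lt_colLen.mpr hi))).1
  · exact forall_lt_iff_le.mp fun j hj => (mem_rect.mp (h (mem_iff_lt_rowLen.mpr hj))).2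
  · exact (mem_iff_lt_rowLen.mp (μ.up_left_mem c.1.zero_le le_rfl hc)).trans_le hn

lemma card_rect : (rect m n).card = m * n := by
  rw [rect, YoungDiagram.card, Finset.card_product, Finset.card_range, Finset.card_range]

lemma card_transpose : μ.transpose.card = μ.card :=
  Finset.card_map _

lemma card_eq_sum_rowLen (h : μ.colLen 0 ≤ m) : μ.card = ∑ i : Fin m, μ.rowLen i := by
  rw [YoungDiagram.card, Fin.sum_univ_eq_sum_range,
    Finset.card_eq_sum_card_fiberwise (f := Prod.fst) (t := Finset.range m)]
  · exact Finset.sum_congr rfl fun i _ => μ.rowLen_eq_card.symm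
  · exact fun c hc => Finset.mem_coe.mpr <| Finset.mem_range.mpr <| fst_lt_of_mem h hc

/-- The row lengths of `μ` shifted by the staircase, `μ_{m-1-i} + i`: the exponents in the
determinantal formulas for a diagram with at most `m` rows. The rows are listed from the bottom up,
which makes the sequence strictly increasing and keeps signs out of the Vandermonde determinants. -/
def shiftedRowLen (m : ℕ) (μ : YoungDiagram) (i : Fin m) : ℕ := μ.rowLen i.rev + i

lemma shiftedRowLen_rev (i : Fin m) : shiftedRowLen m μ i.rev = μ.rowLen i + i.rev := by
  rw [shiftedRowLen, Fin.rev_rev]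

lemma shiftedRowLen_strictMono : StrictMono (shiftedRowLen m μ) := fun _ _ hij =>
  Nat.add_lt_add_of_le_of_lt (μ.rowLen_anti _ _ (Fin.rev_le_rev.mpr hij.le)) hij

lemma sum_shiftedRowLen (h : μ.colLen 0 ≤ m) :
    ∑ i, shiftedRowLen m μ i = μ.card + ∑ i : Fin m, (i : ℕ) := by
  rw [card_eq_sum_rowLen h, ← Equiv.sum_comp Fin.revPerm fun i : Fin m => μ.rowLen i,
    ← Finset.sum_add_distrib]
  rfl

lemma shiftedRowLen_bot (i : Fin m) : shiftedRowLen m ⊥ i = i := by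
  rw [shiftedRowLen, rowLen_eq_of_forall_mem_iff (n := 0) (by simp), zero_add]

lemma injOn_shiftedRowLen : Set.InjOn (shiftedRowLen k) {ν | ν.colLen 0 ≤ k} := by
  intro μ hμ ν hν h
  have rowLen_eq (i : ℕ) : μ.rowLen i = ν.rowLen i := by
    rcases lt_or_ge i k with hi | hi
    · have := congrFun h (Fin.rev ⟨i, hi⟩)
      rwa [shiftedRowLen_rev, shiftedRowLen_rev, Nat.add_right_cancel_iff] at this
    · rw [rowLen_eq_zero_iff.mpr (le_trans hμ hi), rowLen_eq_zero_iff.mpr (le_trans hν hi)]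
  ext ⟨i, j⟩
  rw [mem_cells, mem_cells, mem_iff_lt_rowLen, mem_iff_lt_rowLen, rowLen_eq]

lemma val_le_of_strictMono {y : Fin k → ℕ} (hy : StrictMono y) (i : Fin k) : (i : ℕ) ≤ y i := by
  simpa using Finset.card_le_card_of_injOn (s := Finset.Iio i) (t := Finset.range (y i)) y
    (fun j hj => by simpa using hy (by simpa using hj)) hy.injective.injOn

lemma monotone_sub_val_of_strictMono {y : Fin k → ℕ} (hy : StrictMono y) :
    Monotone fun i => y i - i := by
  intro i j hij
  have card_le := Finset.card_le_card_of_injOn (s := Finset.Ico i j) (t := Finset.Ico (y i) (y j)) y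
    (fun l hl => by simpa [hy.le_iff_le, hy.lt_iff_lt] using hl) hy.injective.injOn
  rw [Fin.card_Ico, Nat.card_Ico] at card_le
  have := val_le_of_strictMono hy i
  have := hy.monotone hij
  dsimp only
  omega

lemma bijOn_shiftedRowLen :
    Set.BijOn (shiftedRowLen k) {ν | ν.colLen 0 ≤ k} {y | StrictMono y} := by
  refine ⟨fun _ _ => shiftedRowLen_strictMono, injOn_shiftedRowLen, fun y hy => ?_⟩
  have sorted : (List.ofFn fun i : Fin k => y i.rev - i.rev).SortedGE :=
    ((monotone_sub_val_of_strictMono hy).comp_antitone Fin.rev_anti).sortedGE_ofFn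
  refine ⟨ofRowLens _ sorted, ?_, funext fun i => ?_⟩
  · rw [Set.mem_ofPred_eq, ← not_lt, ← mem_iff_lt_colLen, mem_ofRowLens]
    simp
  · have row : (ofRowLens _ sorted).rowLen i.rev = y i - i :=
      rowLen_eq_of_forall_mem_iff fun j => by
        simp only [mem_ofRowLens, List.length_ofFn, Fin.is_lt, exists_true_left, List.getElem_ofFn,
          Fin.eta, Fin.rev_rev]
    rw [shiftedRowLen, row, Nat.sub_add_cancel (val_le_of_strictMono hy i)]

end Diagrams

section SemistandardTableaux

variable {μ ν : YoungDiagram} {k : ℕ}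

/-- The semistandard tableaux of shape `μ` with entries in `{0, …, k-1}`, counted by `ssytCount`. -/
def boundedSsyt (μ : YoungDiagram) (k : ℕ) : Set (SemistandardYoungTableau μ) :=
  {T | ∀ i j, (i, j) ∈ μ → T i j < k}

lemma finite_boundedSsyt : (boundedSsyt μ k).Finite := by
  refine Set.finite_coe_iff.mp <| Finite.of_injective
    (fun (T : boundedSsyt μ k) (c : μ.cells) => (⟨T.1 c.1.1 c.1.2, T.2 _ _ c.2⟩ : Fin k)) ?_
  refine fun T T' h => Subtype.ext <| SemistandardYoungTableau.ext fun i j => ?_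
  by_cases hc : (i, j) ∈ μ
  · exact congrArg Fin.val (congrFun h ⟨(i, j), hc⟩)
  · rw [T.1.zeros hc, T'.1.zeros hc]

lemma row_le_ssyt_apply (T : SemistandardYoungTableau μ) {i j : ℕ} (h : (i, j) ∈ μ) :
    i ≤ T i j := by
  induction i with
  | zero => exact Nat.zero_le _
  | succ i ih =>
    exact (ih (μ.up_left_mem i.le_succ le_rfl h)).trans_lt (T.col_strict i.lt_succ_self h)

theorem ssytCount_pos (h : μ.colLen 0 ≤ k) : 0 < ssytCount μ k := by
  refine (Set.ncard_pos finite_boundedSsyt).mpr ⟨.highestWeight μ, fun _ _ hij => ?_⟩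
  rw [SemistandardYoungTableau.highestWeight_apply, if_pos hij]
  exact fst_lt_of_mem h hij

lemma ssytCount_bot : ssytCount ⊥ k = 1 := by
  refine Set.ncard_eq_one.mpr ⟨default, Set.eq_singleton_iff_unique_mem.mpr ⟨?_, ?_⟩⟩
  · exact fun _ _ h => absurd h (notMem_bot _)
  · exact fun T _ => SemistandardYoungTableau.ext fun i j => by
      rw [T.zeros (notMem_bot _), SemistandardYoungTableau.zeros _ (notMem_bot _)]

/-- The cells of a semistandard tableau holding entries less than `k`. -/
def cellsBelow (T : SemistandardYoungTableau μ) (k : ℕ) : YoungDiagram where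
  cells := μ.cells.filter fun c => T c.1 c.2 < k
  isLowerSet := by
    rintro ⟨i, j⟩ ⟨i', j'⟩ ⟨hi, hj⟩ h
    simp only [Finset.coe_filter, Set.mem_ofPred_eq, mem_cells] at h ⊢
    exact ⟨μ.up_left_mem hi hj h.1,
      ((T.col_weak hi (μ.up_left_mem le_rfl hj h.1)).trans (T.row_weak_of_le hj h.1)).trans_lt h.2⟩

lemma mem_cellsBelow {T : SemistandardYoungTableau μ} {i j : ℕ} :
    (i, j) ∈ cellsBelow T k ↔ (i, j) ∈ μ ∧ T i j < k := by
  rw [← mem_cells, cellsBelow, Finset.mem_filter, mem_cells]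

lemma colLen_cellsBelow_le (T : SemistandardYoungTableau μ) : (cellsBelow T k).colLen 0 ≤ k :=
  forall_lt_iff_le.mp fun _ hi =>
    have ⟨mem, lt⟩ := mem_cellsBelow.mp (mem_iff_lt_colLen.mpr hi)
    (row_le_ssyt_apply T mem).trans_lt lt

/-- The skew shape `μ / ν` is a horizontal strip: no two of its cells lie in the same column. -/
structure IsHorizontalStrip (μ ν : YoungDiagram) : Prop where
  le : ν ≤ μ
  above_mem {i j : ℕ} : (i + 1, j) ∈ μ → (i, j) ∈ ν

lemma isHorizontalStrip_cellsBelow {T : SemistandardYoungTableau μ}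
    (hT : T ∈ boundedSsyt μ (k + 1)) : IsHorizontalStrip μ (cellsBelow T k) where
  le _ hc := (mem_cellsBelow.mp hc).1
  above_mem {i _} h := mem_cellsBelow.mpr ⟨μ.up_left_mem i.le_succ le_rfl h,
    (T.col_strict i.lt_succ_self h).trans_le (Nat.lt_succ_iff.mp (hT _ _ h))⟩

/-- The restriction of a semistandard tableau to a smaller shape. -/
def restrictSsyt (h : ν ≤ μ) (T : SemistandardYoungTableau μ) : SemistandardYoungTableau ν where
  entry i j := if (i, j) ∈ ν then T i j else 0
  row_weak' hj hm := by
    rw [if_pos hm, if_pos (ν.up_left_mem le_rfl hj.le hm)]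
    exact T.row_weak hj (h hm)
  col_strict' hi hm := by
    rw [if_pos hm, if_pos (ν.up_left_mem hi.le le_rfl hm)]
    exact T.col_strict hi (h hm)
  zeros' hm := if_neg hm

lemma restrictSsyt_apply (h : ν ≤ μ) (T : SemistandardYoungTableau μ) (i j : ℕ) :
    restrictSsyt h T i j = if (i, j) ∈ ν then T i j else 0 :=
  rfl

/-- The extension of a semistandard tableau with entries less than `k` from `ν` to `μ` by the value
`k` on the horizontal strip `μ / ν`. -/
def fillStrip (h : IsHorizontalStrip μ ν) (S : SemistandardYoungTableau ν)
    (hS : S ∈ boundedSsyt ν k) : SemistandardYoungTableau μ where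
  entry i j := if (i, j) ∈ ν then S i j else if (i, j) ∈ μ then k else 0
  row_weak' {i j₁ j₂} hj hm := by
    rw [if_pos hm, if_pos (μ.up_left_mem le_rfl hj.le hm)]
    split_ifs with h₁ h₂ h₂
    · exact S.row_weak hj h₂
    · exact (hS _ _ h₁).le
    · exact absurd (ν.up_left_mem le_rfl hj.le h₂) h₁
    · exact le_rfl
  col_strict' {i₁ i₂ j} hi hm := by
    have above : (i₁, j) ∈ ν := h.above_mem (μ.up_left_mem hi le_rfl hm)
    rw [if_pos above, if_pos hm]
    split_ifs with h₂
    · exact S.col_strict hi h₂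
    · exact hS _ _ above
  zeros' hm := by rw [if_neg (mt (h.le ·) hm), if_neg hm]

section fillStrip

variable (h : IsHorizontalStrip μ ν) {S : SemistandardYoungTableau ν} (hS : S ∈ boundedSsyt ν k)

lemma fillStrip_apply (i j : ℕ) :
    fillStrip h S hS i j = if (i, j) ∈ ν then S i j else if (i, j) ∈ μ then k else 0 :=
  rfl

lemma fillStrip_mem : fillStrip h S hS ∈ boundedSsyt μ (k + 1) := by
  intro i j hij
  rw [fillStrip_apply, if_pos hij]
  split_ifs with hν
  · exact (hS _ _ hν).trans k.lt_succ_self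
  · exact k.lt_succ_self

lemma cellsBelow_fillStrip : cellsBelow (fillStrip h S hS) k = ν := by
  ext ⟨i, j⟩
  rw [mem_cells, mem_cells, mem_cellsBelow, fillStrip_apply]
  refine ⟨fun ⟨hμ, lt⟩ => ?_, fun hν => ⟨h.le hν, by rw [if_pos hν]; exact hS _ _ hν⟩⟩
  by_contra hν
  rw [if_neg hν, if_pos hμ] at lt
  exact lt.false

lemma restrictSsyt_fillStrip : restrictSsyt h.le (fillStrip h S hS) = S := by
  refine SemistandardYoungTableau.ext fun i j => ?_
  rw [restrictSsyt_apply, fillStrip_apply]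
  split_ifs with hν
  · rfl
  · exact (S.zeros hν).symm

end fillStrip

theorem bijOn_restrictSsyt (h : IsHorizontalStrip μ ν) :
    Set.BijOn (restrictSsyt h.le) {T ∈ boundedSsyt μ (k + 1) | cellsBelow T k = ν}
      (boundedSsyt ν k) := by
  refine ⟨?mapsTo, ?injOn, fun S hS =>
    ⟨fillStrip h S hS, ⟨fillStrip_mem h hS, cellsBelow_fillStrip h hS⟩,
      restrictSsyt_fillStrip h hS⟩⟩
  case mapsTo =>
    rintro T ⟨-, rfl⟩ i j hij
    rw [restrictSsyt_apply, if_pos hij]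
    exact (mem_cellsBelow.mp hij).2
  case injOn =>
    have apply_eq {T} (hT : T ∈ boundedSsyt μ (k + 1)) (hν : cellsBelow T k = ν) (i j : ℕ) :
        T i j = if (i, j) ∈ μ then if (i, j) ∈ ν then restrictSsyt h.le T i j else k else 0 := by
      split_ifs with hijμ hijν
      · rw [restrictSsyt_apply, if_pos hijν]
      · rw [← hν, mem_cellsBelow, not_and, not_lt] at hijν
        exact (Nat.lt_succ_iff.mp (hT i j hijμ)).antisymm (hijν hijμ)
      · exact T.zeros hijμ
    rintro T ⟨hT, hTν⟩ T' ⟨hT', hTν'⟩ restrict_eq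
    exact SemistandardYoungTableau.ext fun i j => by
      rw [apply_eq hT hTν, apply_eq hT' hTν', restrict_eq]

lemma finite_setOf_isHorizontalStrip (μ : YoungDiagram) (k : ℕ) :
    {ν | IsHorizontalStrip μ ν ∧ ν.colLen 0 ≤ k}.Finite :=
  (finite_setOf_le μ).subset fun _ h => h.1.le

theorem ssytCount_succ (μ : YoungDiagram) (k : ℕ) : ssytCount μ (k + 1) =
    ∑ᶠ ν ∈ {ν | IsHorizontalStrip μ ν ∧ ν.colLen 0 ≤ k}, ssytCount ν k := by
  have fibers : boundedSsyt μ (k + 1) =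
      ⋃ ν ∈ {ν | IsHorizontalStrip μ ν ∧ ν.colLen 0 ≤ k},
        {T ∈ boundedSsyt μ (k + 1) | cellsBelow T k = ν} := by
    ext T
    simp only [Set.mem_iUnion₂, Set.mem_ofPred_eq, exists_prop]
    exact ⟨fun hT => ⟨_, ⟨isHorizontalStrip_cellsBelow hT, colLen_cellsBelow_le T⟩, hT, rfl⟩,
      fun ⟨_, _, hT, _⟩ => hT⟩
  rw [show ssytCount μ (k + 1) = (boundedSsyt μ (k + 1)).ncard from rfl, fibers,
    Set.Finite.ncard_biUnion (finite_setOf_isHorizontalStrip μ k)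
      (fun _ _ => finite_boundedSsyt.sep _)]
  · exact finsum_mem_congr rfl fun ν h => (bijOn_restrictSsyt h.1).ncard_eq
  · exact fun ν _ ν' _ hne => Set.disjoint_left.mpr fun T h h' => hne (h.2.symm.trans h'.2)

lemma isHorizontalStrip_iff_rowLen : IsHorizontalStrip μ ν ↔
    ∀ i, μ.rowLen (i + 1) ≤ ν.rowLen i ∧ ν.rowLen i ≤ μ.rowLen i := by
  refine ⟨fun h i => ⟨?_, rowLen_le_rowLen h.le i⟩, fun h => ⟨?_, ?_⟩⟩
  · exact forall_lt_iff_le.mp fun j hj =>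
      mem_iff_lt_rowLen.mp (h.above_mem (mem_iff_lt_rowLen.mpr hj))
  · exact fun ⟨i, j⟩ hc => mem_iff_lt_rowLen.mpr ((mem_iff_lt_rowLen.mp hc).trans_le (h i).2)
  · exact fun {i j} hc => mem_iff_lt_rowLen.mpr ((mem_iff_lt_rowLen.mp hc).trans_le (h i).1)

lemma isHorizontalStrip_iff_shiftedRowLen (hμ : μ.colLen 0 ≤ k + 1) (hν : ν.colLen 0 ≤ k) :
    IsHorizontalStrip μ ν ↔ shiftedRowLen k ν ∈ Fintype.piFinset fun i : Fin k =>
      Finset.Ico (shiftedRowLen (k + 1) μ i.castSucc) (shiftedRowLen (k + 1) μ i.succ) := by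
  have rows_lt : IsHorizontalStrip μ ν ↔
      ∀ i : Fin k, μ.rowLen (i + 1) ≤ ν.rowLen i ∧ ν.rowLen i ≤ μ.rowLen i := by
    refine isHorizontalStrip_iff_rowLen.trans ⟨fun h i => h i, fun h i => ?_⟩
    rcases lt_or_ge i k with hi | hi
    · exact h ⟨i, hi⟩
    · rw [rowLen_eq_zero_iff.mpr (hν.trans hi),
        rowLen_eq_zero_iff.mpr (hμ.trans (Nat.add_le_add_right hi 1))]
      exact ⟨le_rfl, Nat.zero_le _⟩
  rw [rows_lt, Fintype.mem_piFinset, ← Fin.revPerm.forall_congr_right]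
  refine forall_congr' fun i => ?_
  simp only [Finset.mem_Ico, shiftedRowLen, Fin.rev_castSucc, Fin.rev_succ, Fin.val_succ,
    Fin.val_castSucc, Fin.revPerm_apply]
  omega

lemma strictMono_of_interlacing {x : Fin (k + 1) → ℕ} (hx : Monotone x) {y : Fin k → ℕ}
    (hy : ∀ i, y i ∈ Finset.Ico (x i.castSucc) (x i.succ)) : StrictMono y := fun i j hij =>
  (Finset.mem_Ico.mp (hy i)).2.trans_le <|
    (hx (Fin.succ_le_castSucc_iff.mpr hij)).trans (Finset.mem_Ico.mp (hy j)).1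

theorem bijOn_shiftedRowLen_isHorizontalStrip (hμ : μ.colLen 0 ≤ k + 1) :
    Set.BijOn (shiftedRowLen k) {ν | IsHorizontalStrip μ ν ∧ ν.colLen 0 ≤ k}
      (Fintype.piFinset fun i : Fin k =>
        Finset.Ico (shiftedRowLen (k + 1) μ i.castSucc) (shiftedRowLen (k + 1) μ i.succ)) := by
  refine ⟨fun ν h => (isHorizontalStrip_iff_shiftedRowLen hμ h.2).mp h.1,
    bijOn_shiftedRowLen.injOn.mono fun ν h => h.2, fun y hy => ?_⟩
  obtain ⟨ν, hν, rfl⟩ := bijOn_shiftedRowLen.surjOn <|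
    strictMono_of_interlacing shiftedRowLen_strictMono.monotone (Fintype.mem_piFinset.mp hy)
  exact ⟨ν, ⟨(isHorizontalStrip_iff_shiftedRowLen hμ hν).mpr hy, hν⟩, rfl⟩

theorem natCast_ssytCount_eq_det {R : Type*} [CommRing R] (hμ : μ.colLen 0 ≤ k) :
    (ssytCount μ k : R) =
      (Matrix.of fun i j : Fin k => ((shiftedRowLen k μ i).choose j : R)).det := by
  induction k generalizing μ with
  | zero =>
    obtain rfl : μ = ⊥ :=
      bot_unique fun c hc => absurd (fst_lt_of_mem hμ hc) (Nat.not_lt_zero _)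
    rw [ssytCount_bot, Matrix.det_isEmpty, Nat.cast_one]
  | succ k ih =>
    rw [← sum_det_choose_of_interlacing shiftedRowLen_strictMono.monotone, ssytCount_succ,
      Nat.cast_finsum_mem (finite_setOf_isHorizontalStrip μ k), ← finsum_mem_coe_finset]
    exact finsum_mem_eq_of_bijOn _ (bijOn_shiftedRowLen_isHorizontalStrip hμ) fun ν h => ih h.2

theorem natCast_ssytCount_mul_prod_factorial {R : Type*} [CommRing R] [IsDomain R]
    (hμ : μ.colLen 0 ≤ k) : (ssytCount μ k : R) * ∏ i : Fin k, ((i : ℕ).factorial : R) =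
      (Matrix.vandermonde fun i => (shiftedRowLen k μ i : R)).det := by
  rw [natCast_ssytCount_eq_det hμ, det_vandermonde_natCast, mul_comm]

end SemistandardTableaux

section StandardTableaux

open Function

variable {μ ν : YoungDiagram} {m : ℕ}

lemma finite_setOf_isSyt (μ : YoungDiagram) : {T | IsSyt μ T}.Finite := by
  refine Set.finite_coe_iff.mp <| Finite.of_injective
    (fun (T : {T | IsSyt μ T}) (c : μ.cells) =>
      (⟨T.1 c, Finset.mem_range.mp (T.2.1.mapsTo c.2)⟩ : Fin μ.card)) ?_
  refine fun T T' h => Subtype.ext <| funext fun c => ?_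
  by_cases hc : c ∈ μ
  · exact congrArg Fin.val (congrFun h ⟨c, hc⟩)
  · rw [T.2.2.2.2 c hc, T'.2.2.2.2 c hc]

lemma sytCount_bot : sytCount ⊥ = 1 := by
  refine Set.ncard_eq_one.mpr ⟨0, Set.eq_singleton_iff_unique_mem.mpr ⟨⟨?_, ?_, ?_, ?_⟩, ?_⟩⟩
  · simp [YoungDiagram.card]
  · exact fun _ _ h => absurd h (notMem_bot _)
  · exact fun _ _ h => absurd h (notMem_bot _)
  · exact fun _ _ => rfl
  · exact fun T hT => funext fun c => hT.2.2.2 c (notMem_bot c)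

lemma IsSyt.comp_swap {T : ℕ × ℕ → ℕ} (hT : IsSyt μ T) : IsSyt μ.transpose (T ∘ Prod.swap) := by
  obtain ⟨bij, row, col, zero⟩ := hT
  refine ⟨?_, fun i j h => col j i (mem_transpose.mp h), fun i j h => row j i (mem_transpose.mp h),
    fun c hc => zero _ (mt mem_transpose.mpr hc)⟩
  rw [card_transpose]
  exact bij.comp ⟨fun c hc => mem_transpose.mp hc, Prod.swap_injective.injOn,
    fun c hc => ⟨c.swap, mem_transpose.mpr (c.swap_swap.symm ▸ hc), c.swap_swap⟩⟩

lemma sytCount_transpose (μ : YoungDiagram) : sytCount μ.transpose = sytCount μ := by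
  refine (Set.ncard_congr (fun T _ => T ∘ Prod.swap) (fun T hT => hT.comp_swap)
    (fun T T' _ _ h => Prod.swap_surjective.injective_comp_right h) fun T hT => ?_).symm
  exact ⟨T ∘ Prod.swap, μ.transpose_transpose ▸ hT.comp_swap, rfl⟩

/-- The diagram `ν` arises from `μ` by removing one corner cell, that is, `μ` covers `ν` in Young's
lattice. -/
structure IsCornerRemoval (μ ν : YoungDiagram) : Prop where
  le : ν ≤ μ
  card_add_one : ν.card + 1 = μ.card

/-- The extension of a standard tableau from `ν` to `μ`, where `μ` has one more cell: the new cell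
receives the largest entry. -/
def extendSyt (μ ν : YoungDiagram) (S : ℕ × ℕ → ℕ) (c : ℕ × ℕ) : ℕ :=
  if c ∈ μ ∧ c ∉ ν then ν.card else S c

lemma extendSyt_of_mem {S : ℕ × ℕ → ℕ} {c : ℕ × ℕ} (hc : c ∈ ν) : extendSyt μ ν S c = S c :=
  if_neg fun h => h.2 hc

lemma extendSyt_of_notMem {S : ℕ × ℕ → ℕ} {c : ℕ × ℕ} (hμ : c ∈ μ) (hν : c ∉ ν) :
    extendSyt μ ν S c = ν.card :=
  if_pos ⟨hμ, hν⟩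

lemma IsSyt.lt_card {T : ℕ × ℕ → ℕ} (hT : IsSyt μ T) {c : ℕ × ℕ} (hc : c ∈ μ) : T c < μ.card :=
  Finset.mem_range.mp (hT.1.mapsTo hc)

namespace IsCornerRemoval

lemma exists_cells_eq_insert (h : IsCornerRemoval μ ν) :
    ∃ c ∈ μ, c ∉ ν ∧ insert c ν.cells = μ.cells := by
  obtain ⟨c, hc, insert_eq⟩ :=
    Finset.exists_eq_insert_iff.mpr ⟨cells_subset_iff.mpr h.le, h.card_add_one⟩
  exact ⟨c, mem_cells c |>.mp (insert_eq ▸ Finset.mem_insert_self c _), hc, insert_eq⟩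

lemma mem_of_lt (h : IsCornerRemoval μ ν) {a b : ℕ × ℕ} (hb : b ∈ μ) (hab : a < b) : a ∈ ν := by
  obtain ⟨c, -, -, hc⟩ := h.exists_cells_eq_insert
  have mem_iff (d : ℕ × ℕ) : d ∈ μ ↔ d = c ∨ d ∈ ν := by
    rw [← mem_cells, ← hc, Finset.mem_insert, mem_cells]
  rcases (mem_iff b).mp hb with rfl | hbν
  · exact ((mem_iff a).mp (μ.isLowerSet hab.le hb)).resolve_left hab.ne
  · exact ν.isLowerSet hab.le hbν

variable {S : ℕ × ℕ → ℕ}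

lemma mem_iff_extendSyt_lt (h : IsCornerRemoval μ ν) (hS : IsSyt ν S) {c : ℕ × ℕ} :
    c ∈ ν ↔ c ∈ μ ∧ extendSyt μ ν S c < ν.card := by
  refine ⟨fun hc => ⟨h.le hc, extendSyt_of_mem (μ := μ) hc ▸ hS.lt_card hc⟩, fun ⟨hμ, lt⟩ => ?_⟩
  by_contra hν
  exact (extendSyt_of_notMem hμ hν ▸ lt).false

lemma isSyt_extendSyt (h : IsCornerRemoval μ ν) (hS : IsSyt ν S) : IsSyt μ (extendSyt μ ν S) := by
  have extend_lt {a b : ℕ × ℕ} (hb : b ∈ μ) (hab : a < b) (lt : b ∈ ν → S a < S b) :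
      extendSyt μ ν S a < extendSyt μ ν S b := by
    rw [extendSyt_of_mem (h.mem_of_lt hb hab)]
    by_cases hbν : b ∈ ν
    · rw [extendSyt_of_mem hbν]
      exact lt hbν
    · rw [extendSyt_of_notMem hb hbν]
      exact hS.lt_card (h.mem_of_lt hb hab)
  refine ⟨?bij, fun i j hb => extend_lt hb (by simp) (hS.2.1 i j),
    fun i j hb => extend_lt hb (by simp) (hS.2.2.1 i j), fun c hc => ?zero⟩
  case bij =>
    obtain ⟨c, hcμ, hcν, hc⟩ := h.exists_cells_eq_insert
    have := (hS.1.congr fun d hd => (extendSyt_of_mem (μ := μ) hd).symm).insert (a := c)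
      (by simp [extendSyt_of_notMem hcμ hcν])
    rwa [extendSyt_of_notMem hcμ hcν, ← Finset.coe_insert, ← Finset.coe_insert, hc,
      ← Finset.range_add_one, h.card_add_one] at this
  case zero =>
    rw [extendSyt, if_neg fun hc' => hc hc'.1]
    exact hS.2.2.2 c fun hcν => hc (h.le hcν)

lemma injOn_extendSyt : Set.InjOn (extendSyt μ ν) {S | IsSyt ν S} := by
  intro S (hS : IsSyt ν S) S' (hS' : IsSyt ν S') heq
  funext c
  by_cases hc : c ∈ ν
  · rw [← extendSyt_of_mem (μ := μ) (S := S) hc, heq, extendSyt_of_mem hc]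
  · rw [hS.2.2.2 c hc, hS'.2.2.2 c hc]

lemma isSyt_indicator {T : ℕ × ℕ → ℕ} (h : IsCornerRemoval μ ν) (hT : IsSyt μ T)
    (last : ∀ {c}, c ∈ μ → c ∉ ν → T c = ν.card) : IsSyt ν ((ν : Set (ℕ × ℕ)).indicator T) := by
  have apply_eq {c : ℕ × ℕ} (hc : c ∈ ν) : (ν : Set (ℕ × ℕ)).indicator T c = T c :=
    Set.indicator_of_mem hc T
  refine ⟨?bij, fun i j hc => ?row, fun i j hc => ?col, fun c hc => Set.indicator_of_notMem hc T⟩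
  case bij =>
    obtain ⟨c, hcμ, hcν, hc⟩ := h.exists_cells_eq_insert
    refine Set.BijOn.congr ?_ fun d hd => (apply_eq hd).symm
    rw [← Set.BijOn.insert_iff (mt Finset.mem_coe.mp hcν) (by simp [last hcμ hcν]), last hcμ hcν,
      ← Finset.coe_insert, ← Finset.coe_insert, hc, ← Finset.range_add_one, h.card_add_one]
    exact hT.1
  case row =>
    rw [apply_eq hc, apply_eq (ν.up_left_mem le_rfl j.le_succ hc)]
    exact hT.2.1 i j (h.le hc)
  case col =>
    rw [apply_eq hc, apply_eq (ν.up_left_mem i.le_succ le_rfl hc)]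
    exact hT.2.2.1 i j (h.le hc)

end IsCornerRemoval

lemma exists_isCornerRemoval {i j : ℕ} (mem : (i, j) ∈ μ) (below : (i + 1, j) ∉ μ)
    (right : (i, j + 1) ∉ μ) : ∃ ν, IsCornerRemoval μ ν ∧ ν.cells = μ.cells.erase (i, j) := by
  refine ⟨⟨μ.cells.erase (i, j), fun a b hba ha => ?_⟩, ⟨Finset.erase_subset _ _,
    Finset.card_erase_add_one mem⟩, rfl⟩
  rw [Finset.mem_coe, Finset.mem_erase, mem_cells] at ha ⊢
  refine ⟨?_, μ.isLowerSet hba ha.2⟩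
  rintro rfl
  rcases hba.1.lt_or_eq with row_lt | row_eq
  · exact below (μ.up_left_mem row_lt hba.2 ha.2)
  · have col_lt : j < a.2 := hba.2.lt_of_ne fun col_eq => ha.1 (Prod.ext row_eq col_eq).symm
    exact right (μ.up_left_mem hba.1 col_lt ha.2)

lemma IsSyt.exists_eq_extendSyt {T : ℕ × ℕ → ℕ} (hT : IsSyt μ T) (hμ : μ.card ≠ 0) :
    ∃ ν, IsCornerRemoval μ ν ∧ ∃ S, IsSyt ν S ∧ extendSyt μ ν S = T := by
  obtain ⟨⟨i, j⟩, mem, last⟩ := hT.1.surjOn (a := μ.card - 1) (by simpa using hμ.bot_lt)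
  have maximal {c : ℕ × ℕ} (lt : T (i, j) < T c) : c ∉ μ := fun hc => by
    have := hT.lt_card hc
    omega
  obtain ⟨ν, h, cells_eq⟩ := exists_isCornerRemoval mem (fun hc => maximal (hT.2.2.1 _ _ hc) hc)
    fun hc => maximal (hT.2.1 _ _ hc) hc
  have eq_last {c : ℕ × ℕ} (hc : c ∈ μ) (hν : c ∉ ν) : T c = ν.card := by
    obtain rfl : c = (i, j) := by
      by_contra hne
      rw [← mem_cells, cells_eq] at hν
      exact hν (Finset.mem_erase.mpr ⟨hne, hc⟩)
    have := h.card_add_one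
    omega
  refine ⟨ν, h, _, h.isSyt_indicator hT eq_last, funext fun c => ?_⟩
  by_cases hν : c ∈ ν
  · rw [extendSyt_of_mem hν]
    exact Set.indicator_of_mem hν T
  by_cases hμ : c ∈ μ
  · rw [extendSyt_of_notMem hμ hν, eq_last hμ hν]
  · rw [extendSyt, if_neg fun hc => hμ hc.1, hT.2.2.2 c hμ]
    exact Set.indicator_of_notMem hν T

theorem sytCount_eq_finsum (hμ : μ.card ≠ 0) :
    sytCount μ = ∑ᶠ ν ∈ {ν | IsCornerRemoval μ ν}, sytCount ν := by
  have partition : {T | IsSyt μ T} =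
      ⋃ ν ∈ {ν | IsCornerRemoval μ ν}, extendSyt μ ν '' {S | IsSyt ν S} := by
    ext T
    simp only [Set.mem_iUnion₂, Set.mem_ofPred_eq, exists_prop, Set.mem_image]
    refine ⟨fun hT => hT.exists_eq_extendSyt hμ, ?_⟩
    rintro ⟨ν, h, S, hS, rfl⟩
    exact h.isSyt_extendSyt hS
  rw [sytCount, partition, Set.Finite.ncard_biUnion ((finite_setOf_le μ).subset fun _ h => h.le)
      (fun ν _ => (finite_setOf_isSyt ν).image _)]
  · exact finsum_mem_congr rfl fun ν _ => IsCornerRemoval.injOn_extendSyt.ncard_image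
  · refine fun ν h ν' h' hne => Set.disjoint_left.mpr ?_
    rintro _ ⟨S, hS, rfl⟩ ⟨S', hS', heq⟩
    refine hne (SetLike.ext fun c => ?_)
    have card_eq : ν.card = ν'.card :=
      Nat.add_right_cancel (h.card_add_one.trans h'.card_add_one.symm)
    rw [h.mem_iff_extendSyt_lt hS, h'.mem_iff_extendSyt_lt hS', heq, card_eq]

lemma sum_update_sub_one {ι : Type*} [Fintype ι] [DecidableEq ι] {x : ι → ℕ} {i : ι}
    (hi : x i ≠ 0) :
    ∑ j, update x i (x i - 1) j + 1 = ∑ j, x j := by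
  rw [Finset.sum_update_of_mem (Finset.mem_univ i), Finset.sdiff_singleton_eq_erase,
    ← Finset.add_sum_erase _ _ (Finset.mem_univ i)]
  omega

lemma exists_eq_update_of_le {ι : Type*} [Fintype ι] [DecidableEq ι] {x y : ι → ℕ}
    (hyx : y ≤ x) (hsum : ∑ i, y i + 1 = ∑ i, x i) :
    ∃ i, x i ≠ 0 ∧ y = update x i (x i - 1) := by
  obtain ⟨i, -, lt⟩ := Finset.exists_lt_of_sum_lt (s := Finset.univ) (f := y) (g := x) (by omega)
  refine ⟨i, Nat.ne_zero_of_lt lt, ?_⟩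
  have le_update : y ≤ update x i (x i - 1) :=
    le_update_iff.mpr ⟨Nat.le_sub_one_of_lt lt, fun j _ => hyx j⟩
  have sum_eq : ∑ j, y j = ∑ j, update x i (x i - 1) j := by
    have := sum_update_sub_one (Nat.ne_zero_of_lt lt)
    omega
  exact funext fun j => (Finset.sum_eq_sum_iff_of_le fun j _ => le_update j).mp sum_eq j
    (Finset.mem_univ j)

lemma shiftedRowLen_le_iff (hν : ν.colLen 0 ≤ m) :
    shiftedRowLen m ν ≤ shiftedRowLen m μ ↔ ν ≤ μ := by
  refine ⟨fun h ⟨i, j⟩ hc => ?_, fun h i => Nat.add_le_add_right (rowLen_le_rowLen h _) _⟩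
  have := h (Fin.rev ⟨i, fst_lt_of_mem hν hc⟩)
  rw [shiftedRowLen_rev, shiftedRowLen_rev, Nat.add_le_add_iff_right] at this
  exact mem_iff_lt_rowLen.mpr ((mem_iff_lt_rowLen.mp hc).trans_le this)

lemma isCornerRemoval_iff_shiftedRowLen (hμ : μ.colLen 0 ≤ m) (hν : ν.colLen 0 ≤ m) :
    IsCornerRemoval μ ν ↔ shiftedRowLen m ν ≤ shiftedRowLen m μ ∧
      ∑ i, shiftedRowLen m ν i + 1 = ∑ i, shiftedRowLen m μ i := by
  rw [shiftedRowLen_le_iff hν, sum_shiftedRowLen hμ, sum_shiftedRowLen hν, add_right_comm,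
    Nat.add_right_cancel_iff]
  exact ⟨fun h => ⟨h.1, h.2⟩, fun h => ⟨h.1, h.2⟩⟩

theorem bijOn_shiftedRowLen_isCornerRemoval (hμ : μ.colLen 0 ≤ m) :
    Set.BijOn (shiftedRowLen m) {ν | IsCornerRemoval μ ν}
      ((fun i => update (shiftedRowLen m μ) i (shiftedRowLen m μ i - 1)) ''
        {i | shiftedRowLen m μ i ≠ 0 ∧
          StrictMono (update (shiftedRowLen m μ) i (shiftedRowLen m μ i - 1))}) := by
  have colLen_le {ν} (h : IsCornerRemoval μ ν) : ν.colLen 0 ≤ m :=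
    (colLen_le_colLen h.le 0).trans hμ
  refine ⟨fun ν h => ?_, bijOn_shiftedRowLen.injOn.mono fun ν h => colLen_le h, ?_⟩
  · obtain ⟨le, sum⟩ := (isCornerRemoval_iff_shiftedRowLen hμ (colLen_le h)).mp h
    obtain ⟨i, hi, eq_update⟩ := exists_eq_update_of_le le sum
    exact ⟨i, ⟨hi, eq_update ▸ shiftedRowLen_strictMono⟩, eq_update.symm⟩
  · rintro _ ⟨i, ⟨hi, mono⟩, rfl⟩
    obtain ⟨ν, hν, eq_update⟩ := bijOn_shiftedRowLen.surjOn mono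
    refine ⟨ν, (isCornerRemoval_iff_shiftedRowLen hμ hν).mpr ?_, eq_update⟩
    rw [eq_update]
    exact ⟨update_le_self_iff.mpr (Nat.sub_le _ _), sum_update_sub_one hi⟩

lemma strictMono_update_sub_one {ι : Type*} [LinearOrder ι] {x : ι → ℕ} (hx : StrictMono x)
    {i : ι} (h : Injective (update x i (x i - 1))) : StrictMono (update x i (x i - 1)) := by
  refine Monotone.strictMono_of_injective (monotone_iff_forall_lt.mpr fun a b hab => ?_) h
  have := hx hab
  simp only [update_apply]
  split_ifs <;> grind

lemma prod_factorial_eq_mul {ι : Type*} [Fintype ι] [DecidableEq ι] {x : ι → ℕ}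
    {i : ι} (hi : x i ≠ 0) :
    ∏ j, (x j).factorial = x i * ∏ j, (update x i (x i - 1) j).factorial := by
  rw [← Finset.mul_prod_erase _ _ (Finset.mem_univ i),
    ← Finset.mul_prod_erase _ (fun j => (update x i (x i - 1) j).factorial) (Finset.mem_univ i),
    update_self, ← mul_assoc, Nat.mul_factorial_pred hi]
  congr 1
  exact Finset.prod_congr rfl fun j hj => by rw [update_of_ne (Finset.ne_of_mem_erase hj)]

/-- The quotient `Δ(x) / ∏ xᵢ!`, which is `f^μ / |μ|!` at the shifted row lengths of `μ`. -/
def vandermondeRatio (x : Fin m → ℕ) : ℚ :=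
  (Matrix.vandermonde fun i => (x i : ℚ)).det / ∏ i, ((x i).factorial : ℚ)

lemma vandermondeRatio_eq_zero {x : Fin m → ℕ} (hx : ¬ Injective x) : vandermondeRatio x = 0 := by
  have det_eq_zero : (Matrix.vandermonde fun i => (x i : ℚ)).det = 0 := by
    contrapose! hx
    exact (Matrix.det_vandermonde_ne_zero_iff.mp hx).of_comp (f := Nat.cast)
  rw [vandermondeRatio, det_eq_zero, zero_div]

lemma vandermondeRatio_update_sub_one {x : Fin m → ℕ} {i : Fin m} (hi : x i ≠ 0) :
    vandermondeRatio (update x i (x i - 1)) =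
      x i * (Matrix.vandermonde (update (fun j => (x j : ℚ)) i (x i - 1))).det /
        ∏ j, ((x j).factorial : ℚ) := by
  have cast_update : (fun j => (update x i (x i - 1) j : ℚ)) =
      update (fun j => (x j : ℚ)) i (x i - 1) := by
    rw [← Nat.cast_pred (Nat.pos_of_ne_zero hi)]
    exact comp_update (Nat.cast : ℕ → ℚ) x i (x i - 1)
  rw [vandermondeRatio, cast_update, ← Nat.cast_prod, ← Nat.cast_prod, prod_factorial_eq_mul hi,
    Nat.cast_mul, mul_div_mul_left _ _ (Nat.cast_ne_zero.mpr hi)]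

lemma sum_vandermondeRatio {x : Fin m → ℕ} (hx : StrictMono x) :
    ∑ i with x i ≠ 0 ∧ StrictMono (update x i (x i - 1)),
      vandermondeRatio (update x i (x i - 1)) =
        (∑ i, (x i : ℚ) - ∑ i : Fin m, (i : ℚ)) * vandermondeRatio x := by
  rw [vandermondeRatio, ← mul_div_assoc, ← sum_mul_det_vandermonde_update_sub_one, Finset.sum_div,
    Finset.sum_congr rfl fun i hi => vandermondeRatio_update_sub_one (Finset.mem_filter.mp hi).2.1]
  refine Finset.sum_filter_of_ne fun i _ ne_zero => ?_
  have hi : x i ≠ 0 := by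
    rintro hi
    simp [hi] at ne_zero
  rw [← vandermondeRatio_update_sub_one hi] at ne_zero
  exact ⟨hi, strictMono_update_sub_one hx (not_imp_comm.mp vandermondeRatio_eq_zero ne_zero)⟩

lemma finsum_isCornerRemoval_vandermondeRatio (hμ : μ.colLen 0 ≤ m) :
    ∑ᶠ ν ∈ {ν | IsCornerRemoval μ ν}, vandermondeRatio (shiftedRowLen m ν) =
      μ.card * vandermondeRatio (shiftedRowLen m μ) := by
  set x := shiftedRowLen m μ
  have injOn : Set.InjOn (fun i => update x i (x i - 1))
      {i | x i ≠ 0 ∧ StrictMono (update x i (x i - 1))} := by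
    intro i hi j _ h
    by_contra hne
    have := congrFun h i
    simp only [update_self, update_of_ne hne] at this
    exact Nat.sub_one_ne_self hi.1 this
  rw [finsum_mem_eq_of_bijOn _ (bijOn_shiftedRowLen_isCornerRemoval hμ) fun _ _ => rfl,
    finsum_mem_image injOn, ← Finset.coe_filter_univ, finsum_mem_coe_finset,
    sum_vandermondeRatio shiftedRowLen_strictMono]
  congr 1
  rw [sub_eq_iff_eq_add]
  exact_mod_cast sum_shiftedRowLen hμ

theorem sytCount_eq_factorial_mul_vandermondeRatio (hμ : μ.colLen 0 ≤ m) :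
    (sytCount μ : ℚ) = μ.card.factorial * vandermondeRatio (shiftedRowLen m μ) := by
  induction hN : μ.card generalizing μ with
  | zero =>
    obtain rfl : μ = ⊥ := YoungDiagram.ext (Finset.card_eq_zero.mp hN)
    have := natCast_ssytCount_mul_prod_factorial (R := ℚ) hμ
    rw [ssytCount_bot, Nat.cast_one, one_mul] at this
    rw [sytCount_bot, vandermondeRatio, ← this]
    simp_rw [shiftedRowLen_bot]
    field_simp
    simp
  | succ N ih =>
    have ih' {ν} (h : IsCornerRemoval μ ν) :
        (sytCount ν : ℚ) = N.factorial * vandermondeRatio (shiftedRowLen m ν) :=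
      ih ((colLen_le_colLen h.le 0).trans hμ) (Nat.add_right_cancel (h.card_add_one.trans hN))
    have finite : {ν | IsCornerRemoval μ ν}.Finite := (finite_setOf_le μ).subset fun _ h => h.le
    rw [sytCount_eq_finsum (by omega), Nat.cast_finsum_mem finite,
      finsum_mem_congr (s := {ν | IsCornerRemoval μ ν}) rfl fun ν h => ih' h, ← mul_finsum_mem,
      finsum_isCornerRemoval_vandermondeRatio hμ, hN, Nat.factorial_succ]
    push_cast
    ring

theorem sytCount_mul_prod_factorial (hμ : μ.colLen 0 ≤ m) :
    sytCount μ * ∏ i, (shiftedRowLen m μ i).factorial =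
      μ.card.factorial * (ssytCount μ m * ∏ i : Fin m, (i : ℕ).factorial) := by
  have hℚ : (sytCount μ : ℚ) * ∏ i, ((shiftedRowLen m μ i).factorial : ℚ) =
      μ.card.factorial * (ssytCount μ m * ∏ i : Fin m, ((i : ℕ).factorial : ℚ)) := by
    rw [sytCount_eq_factorial_mul_vandermondeRatio hμ, vandermondeRatio,
      natCast_ssytCount_mul_prod_factorial hμ, mul_assoc, div_mul_cancel₀]
    exact Finset.prod_ne_zero_iff.mpr fun i _ => Nat.cast_ne_zero.mpr (Nat.factorial_ne_zero _)
  exact_mod_cast hℚ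

end StandardTableaux

section Complement

variable {μ : YoungDiagram} {m n : ℕ}

lemma mem_complement {c : ℕ × ℕ} :
    c ∈ complement m n μ ↔ c.1 < m ∧ c.2 < n - μ.rowLen (m - 1 - c.1) := by
  rw [← mem_cells, complement, Finset.mem_filter, Finset.mem_product, Finset.mem_range,
    Finset.mem_range]
  omega

lemma colLen_zero_complement_le : (complement m n μ).colLen 0 ≤ m :=
  forall_lt_iff_le.mp fun _ hi => (mem_complement.mp (mem_iff_lt_colLen.mpr hi)).1

lemma complement_bot : complement m n ⊥ = rect m n :=
  SetLike.ext fun c => by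
    rw [mem_complement, mem_rect, rowLen_eq_of_forall_mem_iff (n := 0) (by simp), Nat.sub_zero]

lemma rowLen_complement (i : Fin m) : (complement m n μ).rowLen i = n - μ.rowLen i.rev :=
  rowLen_eq_of_forall_mem_iff fun j => by
    rw [mem_complement, and_iff_right i.is_lt, Fin.val_rev, Nat.sub_sub, Nat.add_comm 1]

lemma shiftedRowLen_complement (i : Fin m) :
    shiftedRowLen m (complement m n μ) i = n - μ.rowLen i + i := by
  rw [shiftedRowLen, rowLen_complement, Fin.rev_rev]

lemma card_complement_add_card (h : μ ≤ rect m n) :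
    (complement m n μ).card + μ.card = m * n := by
  obtain ⟨hm, hn⟩ := le_rect_iff.mp h
  rw [card_eq_sum_rowLen hm, card_eq_sum_rowLen colLen_zero_complement_le,
    ← Equiv.sum_comp Fin.revPerm, ← Finset.sum_add_distrib]
  calc ∑ i : Fin m, ((complement m n μ).rowLen i.rev + μ.rowLen i) = ∑ _i : Fin m, n :=
        Finset.sum_congr rfl fun i _ => by
          rw [rowLen_complement, Fin.rev_rev,
            Nat.sub_add_cancel ((μ.rowLen_anti 0 i i.val.zero_le).trans hn)]
    _ = m * n := by simp

lemma ssytCount_complement (h : μ ≤ rect m n) :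
    ssytCount (complement m n μ) m = ssytCount μ m := by
  obtain ⟨hm, hn⟩ := le_rect_iff.mp h
  have reflect (i : Fin m) : (shiftedRowLen m (complement m n μ) i : ℚ) =
      (m + n - 1) - shiftedRowLen m μ i.rev := by
    have rowLen_le := (μ.rowLen_anti 0 i i.val.zero_le).trans hn
    rw [shiftedRowLen_complement, shiftedRowLen_rev, Fin.val_rev, Nat.cast_add, Nat.cast_add,
      Nat.cast_sub rowLen_le, Nat.cast_sub i.is_lt]
    push_cast
    ring
  have prod_ne_zero : ∏ i : Fin m, ((i : ℕ).factorial : ℚ) ≠ 0 :=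
    Finset.prod_ne_zero_iff.mpr fun i _ => Nat.cast_ne_zero.mpr (Nat.factorial_ne_zero _)
  refine Nat.cast_injective (R := ℚ) (mul_right_cancel₀ prod_ne_zero ?_)
  rw [natCast_ssytCount_mul_prod_factorial hm,
    natCast_ssytCount_mul_prod_factorial colLen_zero_complement_le, funext reflect,
    det_vandermonde_sub_rev fun i => (shiftedRowLen m μ i : ℚ)]

-- The two sequences number the vertical and the horizontal steps of the boundary path of `μ`.
lemma shiftedRowLen_transpose_ne_shiftedRowLen_complement (j : Fin n) (i : Fin m) :
    shiftedRowLen n μ.transpose j ≠ shiftedRowLen m (complement m n μ) i := by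
  rw [shiftedRowLen_complement, shiftedRowLen, rowLen_transpose]
  have mem_iff : j.rev.val < μ.rowLen i ↔ i.val < μ.colLen j.rev :=
    mem_iff_lt_rowLen.symm.trans mem_iff_lt_colLen
  have := j.val_rev
  omega

lemma shiftedRowLen_lt (h : μ.rowLen 0 ≤ n) (i : Fin m) : shiftedRowLen m μ i < m + n := by
  have := (μ.rowLen_anti 0 i.rev (Nat.zero_le _)).trans h
  rw [shiftedRowLen]
  omega

theorem prod_shiftedRowLen_transpose_mul_complement {M : Type*} [CommMonoid M] (g : ℕ → M)
    (h : μ.colLen 0 ≤ m) :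
    (∏ j, g (shiftedRowLen n μ.transpose j)) * ∏ i, g (shiftedRowLen m (complement m n μ) i) =
      ∏ k : Fin (n + m), g k := by
  have rowLen_le : (complement m n μ).rowLen 0 ≤ n :=
    forall_lt_iff_le.mp fun j hj =>
      (mem_complement.mp (mem_iff_lt_rowLen.mpr hj)).2.trans_le (Nat.sub_le _ _)
  let f : Fin n ⊕ Fin m → Fin (n + m) := Sum.elim
    (fun j => ⟨_, shiftedRowLen_lt (μ := μ.transpose) ((rowLen_transpose μ 0).trans_le h) j⟩)
    (fun i => ⟨_, (shiftedRowLen_lt rowLen_le i).trans_eq (Nat.add_comm m n)⟩)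
  have injective : Function.Injective f := by
    refine Function.Injective.sumElim ?_ ?_ fun j i hji =>
      shiftedRowLen_transpose_ne_shiftedRowLen_complement j i (congrArg Fin.val hji)
    · exact fun _ _ h => shiftedRowLen_strictMono.injective (congrArg Fin.val h)
    · exact fun _ _ h => shiftedRowLen_strictMono.injective (congrArg Fin.val h)
  have bijective : Function.Bijective f :=
    (Fintype.bijective_iff_injective_and_card f).mpr ⟨injective, by simp⟩
  rw [← bijective.prod_comp fun k => g k, Fintype.prod_sum_type]
  rfl

theorem sytCount_mul_sytCount_complement_mul_prod_factorial (h : μ ≤ rect m n) :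
    sytCount μ * sytCount (complement m n μ) * ∏ k : Fin (n + m), (k : ℕ).factorial =
      μ.card.factorial * (complement m n μ).card.factorial *
        (ssytCount μ m * ssytCount μ.transpose n *
          ((∏ i : Fin m, (i : ℕ).factorial) * ∏ j : Fin n, (j : ℕ).factorial)) := by
  obtain ⟨hm, hn⟩ := le_rect_iff.mp h
  have transposed := sytCount_mul_prod_factorial ((colLen_transpose μ 0).trans_le hn)
  have complemented := sytCount_mul_prod_factorial (μ := complement m n μ) (m := m)
    colLen_zero_complement_le
  rw [sytCount_transpose, card_transpose] at transposed
  rw [ssytCount_complement h] at complemented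
  rw [← prod_shiftedRowLen_transpose_mul_complement _ hm, mul_mul_mul_comm, transposed,
    complemented]
  ring

theorem sytCount_rect_mul_prod_factorial (m n : ℕ) :
    sytCount (rect m n) * ∏ k : Fin (n + m), (k : ℕ).factorial =
      (m * n).factorial *
        ((∏ i : Fin m, (i : ℕ).factorial) * ∏ j : Fin n, (j : ℕ).factorial) := by
  have transpose_bot : (⊥ : YoungDiagram).transpose = ⊥ := rfl
  have card_bot : (⊥ : YoungDiagram).card = 0 := rfl
  simpa [complement_bot, transpose_bot, card_bot, sytCount_bot, ssytCount_bot, card_rect] using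
    sytCount_mul_sytCount_complement_mul_prod_factorial (bot_le : ⊥ ≤ rect m n)

theorem sytCount_mul_sytCount_complement_mul_choose (h : μ ≤ rect m n) :
    sytCount μ * sytCount (complement m n μ) * (m * n).choose μ.card =
      sytCount (rect m n) * (ssytCount μ m * ssytCount μ.transpose n) := by
  have prod_pos : 0 < ∏ k : Fin (n + m), (k : ℕ).factorial :=
    Finset.prod_pos fun k _ => Nat.factorial_pos k
  refine Nat.eq_of_mul_eq_mul_right prod_pos ?_
  rw [mul_right_comm, sytCount_mul_sytCount_complement_mul_prod_factorial h,
    mul_right_comm (sytCount (rect m n)), sytCount_rect_mul_prod_factorial,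
    ← card_complement_add_card h, ← Nat.add_choose_mul_factorial_mul_factorial]
  ring

end Complement

/-- the ratio `f^λ f^{n^m/λ} / (s_λ(1^m) s_{λ'}(1^n))` does not depend on
`λ ⊆ n^m` with `|λ| = p`: it equals `f^{n^m} / C(mn,p)`. -/
theorem ratio_constant (m n p : ℕ) (μ : YoungDiagram)
    (hμ : μ ≤ rect m n) (hp : μ.card = p) :
    (sytCount μ * sytCount (complement m n μ) : ℚ)
        / (ssytCount μ m * ssytCount μ.transpose n)
      = (sytCount (rect m n) : ℚ) / (m * n).choose p := by
  obtain ⟨hm, hn⟩ := le_rect_iff.mp hμ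
  have ssyt_pos : 0 < ssytCount μ m * ssytCount μ.transpose n :=
    Nat.mul_pos (ssytCount_pos hm) (ssytCount_pos ((colLen_transpose μ 0).trans_le hn))
  have card_le : p ≤ m * n := by
    rw [← hp, ← card_complement_add_card hμ]
    exact Nat.le_add_left _ _
  rw [div_eq_div_iff (by exact_mod_cast ssyt_pos.ne')
    (Nat.cast_ne_zero.mpr (Nat.choose_pos card_le).ne'), ← hp]
  exact_mod_cast sytCount_mul_sytCount_complement_mul_choose hμ
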